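/- arXiv:1504.01681 — 2 statements merged into one kernel-verified Lean document; each statement's English description precedes it below -/
import Mathlib

section
/- The number of self-conjugate partitions that are simultaneously s-cores and t-cores, for coprime positive integers s and t, is binomial(⌊s/2⌋ + ⌊t/2⌋, ⌊s/2⌋). -/
/-- A partition: a weakly decreasing, eventually-zero sequence of naturals
(0-indexed: `f i` is the `(i+1)`-th part). -/
structure Partn where
  f : ℕ → ℕ
  antitone : Antitone f
  eventually_zero : ∃ N, ∀ i, N ≤ i → f i = 0

/-- The beta-set `B(λ) = {λ_i - i : i ≥ 1}`. -/
def betaSet (p : Partn) : Set ℤ := {b | ∃ i : ℕ, b = (p.f i : ℤ) - (i + 1)}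

/-- `conjCount p j` is the `(j+1)`-th part of the conjugate partition. -/
noncomputable def conjCount (p : Partn) (j : ℕ) : ℕ := Set.ncard {i : ℕ | j + 1 ≤ p.f i}

/-- Hook length of the cell in row `r+1`, column `c+1` (1-indexed formula
`1 + (λ_r - r) + (λ'_c - c)`). -/
noncomputable def hookLen (p : Partn) (r c : ℕ) : ℤ :=
  1 + ((p.f r : ℤ) - (r + 1)) + ((conjCount p c : ℤ) - (c + 1))

/-- `p` is an `s`-core: no hook length is divisible by `s`. -/
def IsCore (s : ℕ) (p : Partn) : Prop :=
  ∀ r c : ℕ, c < p.f r → ¬ ((s : ℤ) ∣ hookLen p r c)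

/-- `p` is self-conjugate. -/
def SelfConj (p : Partn) : Prop := ∀ j, p.f j = conjCount p j

/-- The `s`-set of an `s`-core: `S(λ) = (B(λ)+s) \ B(λ)`. -/
def sSet (s : ℕ) (p : Partn) : Set ℤ := {x | x - s ∈ betaSet p ∧ x ∉ betaSet p}

/-- An `s`-set: `s` integers, pairwise incongruent mod `s`, summing to `C(s,2)`. -/
def IsSSet (s : ℕ) (X : Set ℤ) : Prop :=
  X.ncard = s ∧ (∀ a ∈ X, ∀ b ∈ X, a ≠ b → ¬ ((s : ℤ) ∣ (a - b))) ∧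
    (∑ᶠ x ∈ X, x) = (s.choose 2 : ℤ)

/-- The affine symmetric group `W̃_s`, as a set of permutations of `ℤ`:
`w(m+s) = w(m)+s` and `w(0)+⋯+w(s-1) = C(s,2)`. -/
def AffSymSet (s : ℕ) : Set (Equiv.Perm ℤ) :=
  {w | (∀ m : ℤ, w (m + s) = w m + s) ∧
    (∑ i ∈ Finset.range s, w (i : ℤ)) = (s.choose 2 : ℤ)}

/-- The underlying function of the Coxeter generator `w_i` of `W̃_s`, where `a = i - 1`:
swaps `m` and `m+1` whenever `m ≡ i - 1 (mod s)`. -/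
def genFun (s : ℕ) (a : ℤ) : ℤ → ℤ := fun m =>
  if (s : ℤ) ∣ (m - a) then m + 1 else if (s : ℤ) ∣ (m - a - 1) then m - 1 else m

lemma genFun_involutive (s : ℕ) (hs : 2 ≤ s) (a : ℤ) :
    Function.Involutive (genFun s a) := by
  have h1 : ¬ ((s : ℤ) ∣ 1) := by
    intro h
    have := Int.le_of_dvd one_pos h
    omega
  intro m
  unfold genFun
  by_cases hA : (s : ℤ) ∣ (m - a)
  · rw [if_pos hA]
    have hB : ¬ (s : ℤ) ∣ (m + 1 - a) := by
      intro h
      have := dvd_sub h hA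
      rw [show m + 1 - a - (m - a) = 1 by ring] at this
      exact h1 this
    rw [if_neg hB, if_pos (by rw [show m + 1 - a - 1 = m - a by ring]; exact hA)]
    ring
  · rw [if_neg hA]
    by_cases hB : (s : ℤ) ∣ (m - a - 1)
    · rw [if_pos hB, if_pos (by rw [show m - 1 - a = m - a - 1 by ring]; exact hB)]
      ring
    · rw [if_neg hB, if_neg hA, if_neg hB]

/-- The Coxeter generator `w_i` of `W̃_s`, where `a = i - 1`. -/
def genPerm (s : ℕ) (hs : 2 ≤ s) (a : ℤ) : Equiv.Perm ℤ :=
  (genFun_involutive s hs a).toPerm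

/-- The constant `c = (s-1)(t-1)/2`. -/
def lc (s t : ℕ) : ℤ := (((s : ℤ) - 1) * ((t : ℤ) - 1)) / 2

/-- The image `ẘ_i` of the generator `w_i` under the level `t` action on `ℤ`:
`m ↦ m + t` if `m ≡ (i-1)t - c (mod s)`, `m ↦ m - t` if `m ≡ it - c (mod s)`,
`m ↦ m` otherwise. -/
def levelGenFun (s t : ℕ) (i : ℤ) : ℤ → ℤ := fun m =>
  if (s : ℤ) ∣ (m - ((i - 1) * t - lc s t)) then m + t
  else if (s : ℤ) ∣ (m - (i * t - lc s t)) then m - t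
  else m

/-- `Φ` is (the restriction to `W̃_s` of) the level `t` action of `W̃_s` on `ℤ`:
a multiplicative map on `W̃_s` sending each generator `w_i` to `ẘ_i`. -/
def IsLevelTAction (s t : ℕ) (hs : 2 ≤ s) (Φ : Equiv.Perm ℤ → Equiv.Perm ℤ) : Prop :=
  (∀ w v : Equiv.Perm ℤ, w ∈ AffSymSet s → v ∈ AffSymSet s → Φ (w * v) = Φ w * Φ v) ∧
  (∀ i m : ℤ, Φ (genPerm s hs (i - 1)) m = levelGenFun s t i m)

/-- Removing a rim hook of length `t`, in terms of beta-sets: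
`μ` is obtained from `λ` by removing a rim `t`-hook. -/
def RemoveHook (t : ℕ) (p q : Partn) : Prop :=
  ∃ b ∈ betaSet p, b - t ∉ betaSet p ∧ betaSet q = insert (b - t) (betaSet p \ {b})

/-!
The beta-set of a self-conjugate `(s, t)`-core is a set `B` of integers closed under subtraction
of `s` and of `t` and exchanged with its complement by `x ↦ -1 - x`, and every such `B` arises.
One of `s`, `t` is odd, say `s = 2 * h + 1`. Write an integer as `j * t - i * s - (h + 1)`, where
`(i, j)` is determined up to multiples of `(t, s)`. Then `B` is the region `j ≤ v i` for a monotone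
`v` with `v (i + t) = v i + s` and `v i + v (-1 - i) = -1`. These conditions amount to
`v i + v (t - 1 - i) = 2 * h`, so `v` is determined by `0 ≤ v 0 ≤ ⋯ ≤ v (t / 2 - 1) ≤ h`, and these
values can be prescribed freely: they form a multiset of size `t / 2` in a set of `h + 1` elements.
-/

open Filter
open scoped AddConstMap

section Counting

/-- The multiset of values of a monotone sequence, used to count such sequences. -/
def symOfOrderHom {α : Type*} [Preorder α] {k : ℕ} (f : Fin k →o α) : Sym α k :=
  ⟨List.ofFn f, by simp⟩

lemma symOfOrderHom_bijective {α : Type*} [LinearOrder α] {k : ℕ} :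
    Function.Bijective (symOfOrderHom : (Fin k →o α) → Sym α k) := by
  constructor
  · intro f g hfg
    have hperm : (List.ofFn f).Perm (List.ofFn g) :=
      Multiset.coe_eq_coe.1 (congrArg Subtype.val hfg)
    exact DFunLike.coe_injective <| List.ofFn_injective <|
      hperm.eq_of_sortedLE f.monotone.sortedLE_ofFn g.monotone.sortedLE_ofFn
  · rintro ⟨m, rfl⟩
    have hlength : m.card = (m.sort (· ≤ ·)).length := (m.length_sort (· ≤ ·)).symm
    have hsorted : (m.sort (· ≤ ·)).SortedLE := (m.pairwise_sort (· ≤ ·)).sortedLE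
    refine ⟨⟨fun i => (m.sort (· ≤ ·)).get (i.cast hlength),
      fun i j hij => hsorted.monotone_get hij⟩, Subtype.ext ?_⟩
    have hofFn : List.ofFn (fun i => (m.sort (· ≤ ·)).get (i.cast hlength)) = m.sort (· ≤ ·) := by
      rw [← List.ofFn_congr hlength.symm, List.ofFn_get]
    exact (congrArg _ hofFn).trans (m.sort_eq (· ≤ ·))

lemma card_orderHom_fin (α : Type*) [LinearOrder α] (k : ℕ) :
    Nat.card (Fin k →o α) = (Nat.card α).multichoose k := by
  rw [Nat.card_eq_of_bijective _ symOfOrderHom_bijective, Sym.natCard_sym_eq_multichoose]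

lemma two_mul_count_of_reflect {P : ℕ → Prop} [DecidablePred P] {m : ℕ}
    (h : ∀ n < m, P n ↔ ¬ P (m - 1 - n)) : 2 * Nat.count P m = m := by
  have hcard : ((Finset.range m).filter P).card =
      ((Finset.range m).filter fun n => ¬ P n).card := by
    refine Finset.card_nbij' (m - 1 - ·) (m - 1 - ·) ?_ ?_ ?_ ?_ <;>
      simp only [Set.MapsTo, Set.LeftInvOn, Finset.coe_filter, Finset.mem_range,
        Set.mem_ofPred_eq] <;> grind
  have hsplit := Finset.card_filter_add_card_filter_not (s := Finset.range m) P
  rw [← hcard, Finset.card_range, ← Nat.count_eq_card_filter_range] at hsplit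
  omega

lemma nth_count_add_of_forall_ge {P : ℕ → Prop} [DecidablePred P] {N : ℕ} (h : ∀ n ≥ N, P n)
    (i : ℕ) : Nat.nth P (Nat.count P N + i) = N + i := by
  have hcount : Nat.count P (N + i) = Nat.count P N + i := by
    rw [Nat.count_add, Nat.count_of_forall fun n _ => h _ (Nat.le_add_right N n)]
  rw [← hcount, Nat.nth_count (h _ (Nat.le_add_right N i))]

end Counting

section IntegerFunctions

lemma exists_eq_Iic_of_isLowerSet {S : Set ℤ} (hS : IsLowerSet S) (hne : S.Nonempty)
    (hne' : Sᶜ.Nonempty) : ∃ m, S = Set.Iic m := by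
  obtain ⟨M, hM⟩ := hne'
  have hbdd : BddAbove S := ⟨M, fun x hx => (not_le.1 fun h => hM (hS h hx)).le⟩
  exact ⟨sSup S, Set.ext fun x => ⟨(le_csSup hbdd ·), fun h => hS h (Int.csSup_mem hne hbdd)⟩⟩

lemma exists_monotone_int_extension {α : Type*} [PartialOrder α] [OrderTop α] {k : ℕ}
    (c : Fin k →o α) :
    ∃ C : ℤ → α, Monotone C ∧ (∀ i : Fin k, C i = c i) ∧ ∀ i : ℤ, k ≤ i → C i = ⊤ := by
  refine ⟨fun i => if hi : i.toNat < k then c ⟨i.toNat, hi⟩ else ⊤, fun i j hij => ?_,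
    fun i => by simp, fun i hi => dif_neg (by omega)⟩
  have hij' := Int.toNat_le_toNat hij
  dsimp only
  split_ifs
  · exact c.monotone hij'
  · exact le_top
  · omega
  · exact le_rfl

variable {a b : ℤ}

lemma addConstMap_ext_Ico (ha : 0 < a) {f g : ℤ →+c[a, b] ℤ}
    (h : Set.EqOn f g (Set.Ico 0 a)) : f = g := by
  ext i
  rw [← Int.emod_add_ediv_mul i a, ← smul_eq_mul, AddConstMapClass.map_add_zsmul,
    AddConstMapClass.map_add_zsmul, h ⟨Int.emod_nonneg i ha.ne', Int.emod_lt_of_pos i ha⟩]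

/-- The function `f` with `f (i + a) = f i + b` that agrees with `G` on `[0, a)`. -/
def quasiPeriodicExtension (ha : a ≠ 0) (b : ℤ) (G : ℤ → ℤ) : ℤ →+c[a, b] ℤ where
  toFun i := G (i % a) + i / a * b
  map_add_const' i := by
    rw [Int.add_emod_right, Int.add_ediv_of_dvd_right dvd_rfl, Int.ediv_self ha]
    ring

lemma quasiPeriodicExtension_apply (ha : a ≠ 0) (G : ℤ → ℤ) (i : ℤ) :
    quasiPeriodicExtension ha b G i = G (i % a) + i / a * b := rfl

lemma quasiPeriodicExtension_eqOn_Ico (ha : a ≠ 0) (G : ℤ → ℤ) :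
    Set.EqOn (quasiPeriodicExtension ha b G) G (Set.Ico 0 a) := fun i hi => by
  rw [quasiPeriodicExtension_apply, Int.emod_eq_of_lt hi.1 hi.2,
    Int.ediv_eq_zero_of_lt hi.1 hi.2, zero_mul, add_zero]

lemma monotone_quasiPeriodicExtension (ha : 0 < a) {G : ℤ → ℤ} (hG : MonotoneOn G (Set.Ico 0 a))
    (hwrap : G (a - 1) ≤ G 0 + b) : Monotone (quasiPeriodicExtension ha.ne' b G) := by
  have heq := quasiPeriodicExtension_eqOn_Ico (b := b) ha.ne' G
  have ha_apply : quasiPeriodicExtension ha.ne' b G a = G 0 + b := by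
    rw [AddConstMapClass.map_const, heq ⟨le_rfl, ha⟩]
  refine (AddConstMapClass.monotone_iff_Icc ha 0).2 fun i hi j hj hij => ?_
  rw [zero_add] at hi hj
  rcases hj.2.lt_or_eq with hja | rfl
  · have hi' : i ∈ Set.Ico 0 a := ⟨hi.1, hij.trans_lt hja⟩
    have hj' : j ∈ Set.Ico 0 a := ⟨hj.1, hja⟩
    rw [heq hi', heq hj']
    exact hG hi' hj' hij
  · rcases hij.lt_or_eq with hia | rfl
    · rw [ha_apply, heq ⟨hi.1, hia⟩]
      exact (hG ⟨hi.1, hia⟩ ⟨by omega, by omega⟩ (by omega)).trans hwrap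
    · exact le_rfl

end IntegerFunctions

section BetaSets

attribute [ext] Partn

variable (p : Partn)

lemma lt_conjCount_iff {r c : ℕ} : r < conjCount p c ↔ c < p.f r := by
  classical
  have hex : ∃ n, p.f n ≤ c := p.eventually_zero.imp fun N hN => by simp [hN N le_rfl]
  have hset : {i : ℕ | c + 1 ≤ p.f i} = Set.Iio (Nat.find hex) := Set.ext fun i => by
    simp only [Set.mem_ofPred_eq, Set.mem_Iio, Nat.lt_find_iff, not_le]
    exact ⟨fun h m hm => lt_of_lt_of_le h (p.antitone hm), fun h => h i le_rfl⟩
  rw [conjCount, hset, Set.ncard_Iio_nat, ← Set.mem_Iio, ← hset]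
  exact Nat.succ_le_iff

/-- The conjugate partition. -/
noncomputable def Partn.conj : Partn where
  f := conjCount p
  antitone := fun a b hab => le_of_forall_lt fun r hr => by
    rw [lt_conjCount_iff] at hr ⊢
    exact hab.trans_lt hr
  eventually_zero := ⟨p.f 0, fun c hc => by
    rwa [← Nat.le_zero, ← not_lt, lt_conjCount_iff, not_lt]⟩

lemma notMem_betaSet_iff {x : ℤ} : x ∉ betaSet p ↔ ∃ c : ℕ, x = c - conjCount p c := by
  classical
  constructor
  · intro hx
    have hex : ∃ r : ℕ, (p.f r : ℤ) - (r + 1) < x := by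
      obtain ⟨N, hN⟩ := p.eventually_zero
      refine ⟨max N x.natAbs, ?_⟩
      rw [hN _ (le_max_left _ _)]
      omega
    obtain ⟨r, hlt, hgt⟩ : ∃ r : ℕ, (p.f r : ℤ) - (r + 1) < x ∧
        ∀ m < r, x < (p.f m : ℤ) - (m + 1) :=
      ⟨Nat.find hex, Nat.find_spec hex, fun m hm =>
        (not_lt.1 <| Nat.find_min hex hm).lt_of_ne fun h => hx ⟨m, h⟩⟩
    obtain ⟨c, hc⟩ : ∃ c : ℕ, (c : ℤ) = x + r := ⟨(x + r).toNat, by omega⟩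
    have hle : conjCount p c ≤ r := by
      rw [← not_lt, lt_conjCount_iff]
      omega
    have hge : r ≤ conjCount p c := by
      by_contra! hlt'
      have hgt' := hgt (r - 1) (by omega)
      have := lt_conjCount_iff p (r := r - 1) (c := c)
      omega
    exact ⟨c, by omega⟩
  · rintro ⟨c, rfl⟩ ⟨r, hr⟩
    have := lt_conjCount_iff p (r := r) (c := c)
    omega

variable {p}

lemma mem_betaSet_conj {x : ℤ} : x ∈ betaSet p.conj ↔ -1 - x ∉ betaSet p := by
  rw [notMem_betaSet_iff]
  refine exists_congr fun c => ?_
  change x = conjCount p c - (c + 1) ↔ _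
  omega

lemma betaSet_injective : Function.Injective betaSet := by
  have hmono (p : Partn) : StrictMono fun i : ℕ => (i + 1 : ℤ) - p.f i := fun i j hij => by
    have := p.antitone hij.le
    dsimp only
    omega
  have hmem (p : Partn) (x : ℤ) :
      x ∈ Set.range (fun i : ℕ => (i + 1 : ℤ) - p.f i) ↔ -x ∈ betaSet p :=
    exists_congr fun i => by dsimp only; omega
  rintro p q hpq
  have hfun := ((hmono p).range_inj (hmono q)).1 <| Set.ext fun x => by rw [hmem, hmem, hpq]
  ext i
  have := congrFun hfun i
  omega

/-- A set of integers closed under subtraction of `s`. The beta-sets of the `s`-cores are the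
beta-sets with this property. -/
def IsSubClosed (s : ℤ) (B : Set ℤ) : Prop := ∀ x ∈ B, x - s ∈ B

/-- A set of integers that `x ↦ -1 - x` exchanges with its complement, as it does for the beta-set
of a self-conjugate partition. -/
def IsSelfDual (B : Set ℤ) : Prop := ∀ x, x ∈ B ↔ -1 - x ∉ B

variable {s t : ℤ} {B : Set ℤ}

lemma IsSubClosed.sub_mul_mem (hB : IsSubClosed s B) {x : ℤ} (hx : x ∈ B) (n : ℕ) :
    x - n * s ∈ B := by
  induction n with
  | zero => simpa using hx
  | succ n ih =>
    rw [Nat.cast_succ, add_one_mul, ← sub_sub]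
    exact hB _ ih

lemma IsSelfDual.nonempty (hB : IsSelfDual B) : B.Nonempty := by
  by_cases h0 : (0 : ℤ) ∈ B
  · exact ⟨0, h0⟩
  · exact ⟨-1, (hB _).2 (by simpa using h0)⟩

lemma selfConj_iff_isSelfDual : SelfConj p ↔ IsSelfDual (betaSet p) := by
  have hconj : SelfConj p ↔ betaSet p = betaSet p.conj := by
    rw [betaSet_injective.eq_iff, Partn.ext_iff, funext_iff]
    rfl
  rw [hconj, Set.ext_iff]
  exact forall_congr' fun x => by rw [mem_betaSet_conj]

lemma isCore_iff_isSubClosed {s : ℕ} (hs : 0 < s) : IsCore s p ↔ IsSubClosed s (betaSet p) := by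
  constructor
  · rintro hcore x ⟨r, rfl⟩
    by_contra hx
    obtain ⟨c, hc⟩ := (notMem_betaSet_iff p).1 hx
    have hrc := lt_conjCount_iff p (r := r) (c := c)
    refine hcore r c (by omega) ⟨1, ?_⟩
    rw [hookLen]
    linarith
  · rintro hB r c hcell ⟨k, hk⟩
    have hhook : hookLen p r c = p.f r - (r + 1) - (c - conjCount p c) := by
      rw [hookLen]
      ring
    have hpos : 0 < (s : ℤ) * k := by
      have := (lt_conjCount_iff p).2 hcell
      omega
    lift k to ℕ using (pos_of_mul_pos_right hpos (by positivity)).le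
    refine (notMem_betaSet_iff p).2 ⟨c, ?_⟩ (hB.sub_mul_mem ⟨r, rfl⟩ k)
    linarith

lemma exists_betaSet_eq_of_count [DecidablePred (· ∈ B)] {K : ℕ} (hlow : ∀ x : ℤ, x < -K → x ∈ B)
    (hhigh : ∀ x ∈ B, x < K) (hcount : Nat.count (fun n : ℕ => (K : ℤ) - 1 - n ∈ B) (2 * K) = K) :
    ∃ p, betaSet p = B := by
  set P : ℕ → Prop := fun n => (K : ℤ) - 1 - n ∈ B
  have hP_ge : ∀ n ≥ 2 * K, P n := fun n hn => hlow _ (by omega)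
  have hinf : (Set.ofPred P).Infinite := Set.infinite_of_forall_exists_gt fun n =>
    ⟨2 * K + n + 1, hP_ge _ (by omega), by omega⟩
  have hmono := Nat.nth_strictMono hinf
  have hnth (i : ℕ) : Nat.nth P (K + i) = 2 * K + i := by
    rw [← nth_count_add_of_forall_ge hP_ge i, hcount]
  have hle (i : ℕ) : Nat.nth P i ≤ K + i := by
    have := hmono.add_le_nat K i
    rw [hnth] at this
    omega
  let p : Partn :=
    { f := fun i => K + i - Nat.nth P i
      antitone := antitone_nat_of_succ_le fun i => by
        have : Nat.nth P i < Nat.nth P (i + 1) := hmono i.lt_succ_self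
        omega
      eventually_zero := ⟨K, fun i hi => by
        obtain ⟨j, rfl⟩ := Nat.exists_eq_add_of_le hi
        rw [hnth]
        omega⟩ }
  have hp (i : ℕ) : (p.f i : ℤ) - (i + 1) = K - 1 - Nat.nth P i := by
    have := hle i
    dsimp only [p]
    omega
  refine ⟨p, Set.ext fun x => ⟨?_, fun hx => ?_⟩⟩
  · rintro ⟨i, rfl⟩
    rw [hp]
    exact Nat.nth_mem_of_infinite hinf i
  · obtain ⟨n, rfl⟩ : ∃ n : ℕ, x = K - 1 - n := ⟨(K - 1 - x).toNat, by have := hhigh x hx; omega⟩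
    exact ⟨Nat.count P n, by rw [hp, Nat.nth_count hx]⟩

lemma IsSelfDual.exists_betaSet_eq (hB : IsSelfDual B) (hbot : ∀ᶠ x in atBot, x ∈ B) :
    ∃ p, betaSet p = B := by
  classical
  obtain ⟨b, hb⟩ := eventually_atBot.1 hbot
  have hlow (x : ℤ) (hx : x < -(b.natAbs : ℕ)) : x ∈ B := hb x (by omega)
  refine exists_betaSet_eq_of_count hlow (fun x hx => ?_) ?_
  · by_contra! hxK
    exact (hB x).1 hx (hlow _ (by omega))
  · suffices 2 * Nat.count (fun n : ℕ => (b.natAbs : ℤ) - 1 - n ∈ B) (2 * b.natAbs) =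
      2 * b.natAbs by omega
    refine two_mul_count_of_reflect fun n hn => (hB _).trans ?_
    rw [show -1 - ((b.natAbs : ℤ) - 1 - n) = b.natAbs - 1 - (2 * b.natAbs - 1 - n : ℕ) by omega]

lemma eventually_atBot_mem_of_isSubClosed {s t : ℕ} (hst : s.Coprime t) (hs : IsSubClosed s B)
    (ht : IsSubClosed t B) (hne : B.Nonempty) : ∀ᶠ x in atBot, x ∈ B := by
  obtain ⟨b, hb⟩ := hne
  refine eventually_atBot.2 ⟨b - s.pred * t.pred, fun x hx => ?_⟩
  have hpred : (0 : ℤ) ≤ s.pred * t.pred := by positivity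
  obtain ⟨d, hd⟩ := Int.eq_ofNat_of_zero_le (show 0 ≤ b - x by linarith)
  obtain ⟨m, n, hmn⟩ := Nat.exists_add_mul_eq_of_gcd_dvd_of_mul_pred_le s t d
    (by simp [hst.gcd_eq_one]) (by zify; linarith)
  have hx_eq : b - m * s - n * t = x := by
    zify at hmn
    linarith
  exact hx_eq ▸ ht.sub_mul_mem (hs.sub_mul_mem hb m) n

lemma IsSelfDual.eventually_atTop_notMem (hB : IsSelfDual B) (hbot : ∀ᶠ x in atBot, x ∈ B) :
    ∀ᶠ x in atTop, x ∉ B := by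
  obtain ⟨b, hb⟩ := eventually_atBot.1 hbot
  exact eventually_atTop.2 ⟨-1 - b, fun x hx hxB => (hB x).1 hxB (hb _ (by omega))⟩

/-- The beta-sets of the self-conjugate `(s, t)`-cores, for coprime positive `s` and `t`. -/
def symmIdeals (s t : ℤ) : Set (Set ℤ) := {B | IsSelfDual B ∧ IsSubClosed s B ∧ IsSubClosed t B}

lemma bijOn_betaSet {s t : ℕ} (hs : 0 < s) (ht : 0 < t) (hst : s.Coprime t) :
    Set.BijOn betaSet {p | SelfConj p ∧ IsCore s p ∧ IsCore t p} (symmIdeals s t) := by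
  have hmem (p : Partn) : betaSet p ∈ symmIdeals s t ↔ SelfConj p ∧ IsCore s p ∧ IsCore t p := by
    rw [selfConj_iff_isSelfDual, isCore_iff_isSubClosed hs, isCore_iff_isSubClosed ht]
    rfl
  refine ⟨fun p hp => (hmem p).2 hp, betaSet_injective.injOn, fun B hB => ?_⟩
  have ⟨hdual, hsB, htB⟩ := hB
  obtain ⟨p, rfl⟩ := hdual.exists_betaSet_eq
    (eventually_atBot_mem_of_isSubClosed hst hsB htB hdual.nonempty)
  exact ⟨p, (hmem p).1 hB, rfl⟩

end BetaSets

section Lattice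

variable {s t c : ℤ}

/-- The lattice coordinates `(i, j) ↦ c + j * t - i * s` on `ℤ`, in which subtracting `s` and `t`
are unit steps. -/
def latticePoint (s t c i j : ℤ) : ℤ := c + j * t - i * s

lemma exists_latticePoint_eq (h : IsCoprime s t) (c x : ℤ) : ∃ i j, latticePoint s t c i j = x := by
  obtain ⟨u, v, huv⟩ := h
  exact ⟨(c - x) * u, (x - c) * v, by unfold latticePoint; linear_combination (x - c) * huv⟩

lemma latticePoint_eq_latticePoint_iff (h : IsCoprime s t) {i j i' j' : ℤ} :
    latticePoint s t c i j = latticePoint s t c i' j' ↔ ∃ k, i = i' + k * t ∧ j = j' + k * s := by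
  unfold latticePoint
  constructor
  · obtain ⟨u, v, huv⟩ := h
    intro heq
    refine ⟨u * (j - j') + v * (i - i'), ?_, ?_⟩
    · linear_combination (i' - i) * huv - u * heq
    · linear_combination (j' - j) * huv + v * heq
  · rintro ⟨k, rfl, rfl⟩
    ring

/-- The integers with lattice coordinates `(i, j)` weakly below the graph of `v`. -/
def region (s t c : ℤ) (v : ℤ → ℤ) : Set ℤ := {x | ∃ i j, latticePoint s t c i j = x ∧ j ≤ v i}

lemma latticePoint_mem_region_iff (h : IsCoprime s t) {v : ℤ →+c[t, s] ℤ} {i j : ℤ} :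
    latticePoint s t c i j ∈ region s t c v ↔ j ≤ v i := by
  constructor
  · rintro ⟨i', j', heq, hle⟩
    obtain ⟨k, rfl, rfl⟩ := (latticePoint_eq_latticePoint_iff h).1 heq
    rwa [← smul_eq_mul, ← smul_eq_mul, AddConstMapClass.map_add_zsmul,
      add_le_add_iff_right] at hle
  · exact fun hle => ⟨i, j, rfl, hle⟩

lemma forall_iff_forall_latticePoint (h : IsCoprime s t) (c : ℤ) {P : ℤ → Prop} :
    (∀ x, P x) ↔ ∀ i j, P (latticePoint s t c i j) :=
  ⟨fun hP i j => hP _, fun hP x => by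
    obtain ⟨i, j, rfl⟩ := exists_latticePoint_eq h c x
    exact hP i j⟩

lemma region_injective (h : IsCoprime s t) :
    Function.Injective fun v : ℤ →+c[t, s] ℤ => region s t c v := by
  intro v w hvw
  ext i
  refine eq_of_forall_le_iff fun j => ?_
  rw [← latticePoint_mem_region_iff h, ← latticePoint_mem_region_iff h]
  exact Set.ext_iff.1 hvw _

lemma isSubClosed_region_right (h : IsCoprime s t) (v : ℤ →+c[t, s] ℤ) :
    IsSubClosed t (region s t c v) := by
  refine (forall_iff_forall_latticePoint h c).2 fun i j => ?_
  rw [show latticePoint s t c i j - t = latticePoint s t c i (j - 1) by unfold latticePoint; ring,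
    latticePoint_mem_region_iff h, latticePoint_mem_region_iff h]
  exact fun hle => (sub_one_lt j).le.trans hle

lemma isSubClosed_region_left_iff (h : IsCoprime s t) {v : ℤ →+c[t, s] ℤ} :
    IsSubClosed s (region s t c v) ↔ Monotone v := by
  have hstep (i j : ℤ) : latticePoint s t c i j - s = latticePoint s t c (i + 1) j := by
    unfold latticePoint
    ring
  rw [IsSubClosed, forall_iff_forall_latticePoint h c]
  simp only [hstep, latticePoint_mem_region_iff h]
  exact ⟨fun hstep => monotone_int_of_le_succ fun i => hstep i _ le_rfl,
    fun hmono i j hle => hle.trans (hmono (lt_add_one i).le)⟩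

lemma tendsto_latticePoint_atBot (ht : 0 < t) (i : ℤ) :
    Tendsto (latticePoint s t c i) atBot atBot :=
  tendsto_atBot_add_const_right _ (-(i * s)) <| tendsto_atBot_add_const_left _ c <|
    tendsto_id.atBot_mul_const' ht

lemma tendsto_latticePoint_atTop (ht : 0 < t) (i : ℤ) :
    Tendsto (latticePoint s t c i) atTop atTop :=
  tendsto_atTop_add_const_right _ (-(i * s)) <| tendsto_atTop_add_const_left _ c <|
    tendsto_id.atTop_mul_const' ht

lemma exists_region_eq (h : IsCoprime s t) (ht : 0 < t) {B : Set ℤ} (hB : IsSubClosed t B)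
    (hbot : ∀ᶠ x in atBot, x ∈ B) (htop : ∀ᶠ x in atTop, x ∉ B) (c : ℤ) :
    ∃ v : ℤ →+c[t, s] ℤ, region s t c v = B := by
  have hlower (i : ℤ) : IsLowerSet {j | latticePoint s t c i j ∈ B} := fun j j' hj hmem => by
    lift j - j' to ℕ using sub_nonneg.2 hj with n hn
    rw [Set.mem_ofPred_eq, show latticePoint s t c i j' = latticePoint s t c i j - n * t by
      rw [hn]; unfold latticePoint; ring]
    exact hB.sub_mul_mem hmem n
  have hne (i : ℤ) : {j | latticePoint s t c i j ∈ B}.Nonempty :=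
    ((tendsto_latticePoint_atBot ht i).eventually hbot).exists
  have hne' (i : ℤ) : {j | latticePoint s t c i j ∈ B}ᶜ.Nonempty :=
    ((tendsto_latticePoint_atTop ht i).eventually htop).exists
  choose v hv using fun i => exists_eq_Iic_of_isLowerSet (hlower i) (hne i) (hne' i)
  have hmem (i j : ℤ) : latticePoint s t c i j ∈ B ↔ j ≤ v i := Set.ext_iff.1 (hv i) j
  let w : ℤ →+c[t, s] ℤ :=
    { toFun := v
      map_add_const' := fun i => eq_of_forall_le_iff fun j => by
        rw [← hmem, ← sub_le_iff_le_add, ← hmem]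
        unfold latticePoint
        ring_nf }
  refine ⟨w, Set.ext <| (forall_iff_forall_latticePoint h c).2 fun i j => ?_⟩
  rw [latticePoint_mem_region_iff h, hmem]
  rfl

end Lattice

section SymmetricProfiles

variable {h t : ℕ}

/-- The boundary profiles of the sets in `symmIdeals (2 * h + 1) t`, in the lattice coordinates
with origin `-h - 1`, for which `x ↦ -1 - x` acts as `(i, j) ↦ (-1 - i, -j)`. -/
def symmProfiles (h t : ℕ) : Set (ℤ →+c[(t : ℤ), (2 * h + 1 : ℤ)] ℤ) :=
  {v | Monotone v ∧ ∀ i, v i + v (-1 - i) = -1}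

lemma isSelfDual_region_iff (hst : IsCoprime (2 * h + 1 : ℤ) t)
    {v : ℤ →+c[(t : ℤ), (2 * h + 1 : ℤ)] ℤ} :
    IsSelfDual (region (2 * h + 1) t (-h - 1) v) ↔ ∀ i, v i + v (-1 - i) = -1 := by
  rw [IsSelfDual, forall_iff_forall_latticePoint hst (-h - 1)]
  refine forall_congr' fun i => ?_
  have hreflect (j : ℤ) : -1 - latticePoint (2 * h + 1) t (-h - 1) i j =
      latticePoint (2 * h + 1) t (-h - 1) (-1 - i) (-j) := by
    unfold latticePoint
    ring
  simp only [hreflect, latticePoint_mem_region_iff hst]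
  refine ⟨fun hall => ?_, fun hi j => by omega⟩
  have h1 := hall (v i)
  have h2 := hall (v i + 1)
  omega

lemma bijOn_region (hst : (2 * h + 1).Coprime t) (ht : 0 < t) :
    Set.BijOn (fun v : ℤ →+c[(t : ℤ), (2 * h + 1 : ℤ)] ℤ => region (2 * h + 1) t (-h - 1) v)
      (symmProfiles h t) (symmIdeals (2 * h + 1) t) := by
  have hst' : IsCoprime (2 * h + 1 : ℤ) t := by exact_mod_cast hst.isCoprime
  have hmem (v : ℤ →+c[(t : ℤ), (2 * h + 1 : ℤ)] ℤ) :
      region (2 * h + 1) t (-h - 1) v ∈ symmIdeals (2 * h + 1) t ↔ v ∈ symmProfiles h t := by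
    rw [symmIdeals, Set.mem_ofPred_eq, isSelfDual_region_iff hst',
      isSubClosed_region_left_iff hst', and_iff_left (isSubClosed_region_right hst' v), and_comm]
    rfl
  refine ⟨fun v hv => (hmem v).2 hv, (region_injective hst').injOn, fun B hB => ?_⟩
  have ⟨hdual, hsB, htB⟩ := hB
  have hbot := eventually_atBot_mem_of_isSubClosed hst (by exact_mod_cast hsB) htB hdual.nonempty
  obtain ⟨v, rfl⟩ := exists_region_eq hst' (by exact_mod_cast ht) htB hbot
    (hdual.eventually_atTop_notMem hbot) (-h - 1)
  exact ⟨v, (hmem v).1 hB, rfl⟩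

end SymmetricProfiles

section ProfileCount

variable {h t : ℕ} {v : ℤ →+c[(t : ℤ), (2 * h + 1 : ℤ)] ℤ}

lemma apply_add_apply_reflect (hv : v ∈ symmProfiles h t) (i : ℤ) :
    v i + v (t - 1 - i) = 2 * h := by
  have hreflect := hv.2 i
  rw [show (t : ℤ) - 1 - i = -1 - i + t by ring, AddConstMapClass.map_add_const]
  omega

lemma apply_nonneg_of_mem_symmProfiles (hv : v ∈ symmProfiles h t) {i : ℤ} (hi : 0 ≤ i) :
    0 ≤ v i := by
  have hreflect := hv.2 0
  have hle : v (-1 - 0) ≤ v 0 := hv.1 (by norm_num)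
  have := hv.1 hi
  omega

lemma apply_le_of_mem_symmProfiles (hv : v ∈ symmProfiles h t) {i : ℤ} (hi : 2 * i < t) :
    v i ≤ h := by
  have hreflect := apply_add_apply_reflect hv i
  have hle : v i ≤ v (t - 1 - i) := hv.1 (by omega)
  omega

/-- The first `t / 2` values of a symmetric profile, which determine it. -/
def initialValues (v : symmProfiles h t) : Fin (t / 2) →o Fin (h + 1) where
  toFun i := ⟨(v.1 i).toNat, by have := apply_le_of_mem_symmProfiles v.2 (i := i); omega⟩
  monotone' i j hij := Int.toNat_le_toNat <| v.2.1 (by exact_mod_cast hij)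

lemma coe_initialValues (v : symmProfiles h t) (i : Fin (t / 2)) :
    ((initialValues v i : ℕ) : ℤ) = v.1 i :=
  Int.toNat_of_nonneg <| apply_nonneg_of_mem_symmProfiles v.2 (by positivity)

lemma initialValues_injective (ht : 0 < t) :
    Function.Injective (initialValues : symmProfiles h t → _) := by
  intro v w hvw
  have hinit (i : ℤ) (hi : 0 ≤ i) (hit : i < (t / 2 : ℕ)) : v.1 i = w.1 i := by
    lift i to ℕ using hi
    have hi' : i < t / 2 := by exact_mod_cast hit
    rw [← coe_initialValues v ⟨i, hi'⟩, hvw, coe_initialValues w ⟨i, hi'⟩]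
  refine Subtype.ext <| addConstMap_ext_Ico (by exact_mod_cast ht) fun i hi => ?_
  have hv := apply_add_apply_reflect v.2 i
  have hw := apply_add_apply_reflect w.2 i
  rcases lt_trichotomy (2 * i) (t - 1) with hlt | hmid | hgt
  · exact hinit i hi.1 (by omega)
  · rw [show (t : ℤ) - 1 - i = i by omega] at hv hw
    omega
  · have := hinit (t - 1 - i) (by linarith [hi.2]) (by omega)
    omega

lemma exists_mem_symmProfiles_eqOn (ht : 0 < t) {G : ℤ → ℤ} (hG : MonotoneOn G (Set.Ico 0 t))
    (hG_zero : 0 ≤ G 0) (hreflect : ∀ i ∈ Set.Ico (0 : ℤ) t, G i + G (t - 1 - i) = 2 * h) :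
    ∃ v ∈ symmProfiles h t, Set.EqOn v G (Set.Ico 0 t) := by
  have ht' : (0 : ℤ) < t := by exact_mod_cast ht
  refine ⟨quasiPeriodicExtension ht'.ne' _ G, ⟨monotone_quasiPeriodicExtension ht' hG ?_,
    fun i => ?_⟩, quasiPeriodicExtension_eqOn_Ico ht'.ne' G⟩
  · have hzero := hreflect 0 ⟨le_rfl, ht'⟩
    rw [sub_zero] at hzero
    omega
  · have hlt := Int.emod_lt_of_pos i ht'
    have hnonneg := Int.emod_nonneg i ht'.ne'
    obtain ⟨hdiv, hmod⟩ : (-1 - i) / (t : ℤ) = -1 - i / t ∧ (-1 - i) % (t : ℤ) = t - 1 - i % t :=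
      (Int.ediv_emod_unique ht').2
        ⟨by linear_combination -Int.emod_add_mul_ediv i t, by omega, by omega⟩
    rw [quasiPeriodicExtension_apply, quasiPeriodicExtension_apply, hdiv, hmod]
    linear_combination hreflect (i % t) ⟨hnonneg, hlt⟩

lemma initialValues_surjective (ht : 0 < t) :
    Function.Surjective (initialValues : symmProfiles h t → _) := by
  intro c
  obtain ⟨C, hC_mono, hC_apply, hC_top⟩ := exists_monotone_int_extension c
  have hG_mono : Monotone fun i : ℤ => ((C i : ℕ) : ℤ) - (C (t - 1 - i) : ℕ) + h := by
    intro i j hij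
    have hle : (C i : ℕ) ≤ C j := hC_mono hij
    have hle' : (C (t - 1 - j) : ℕ) ≤ C (t - 1 - i) := hC_mono (by omega)
    dsimp only
    omega
  obtain ⟨v, hv, hvG⟩ := exists_mem_symmProfiles_eqOn ht (hG_mono.monotoneOn _) (by omega)
    fun i _ => by rw [sub_sub_cancel]; ring
  refine ⟨⟨v, hv⟩, DFunLike.ext _ _ fun i => Fin.ext <| Int.ofNat_inj.1 ?_⟩
  have hG_apply : ((C i : ℕ) : ℤ) - (C (t - 1 - i) : ℕ) + h = (c i : ℕ) := by
    rw [hC_apply, hC_top _ (by omega), Fin.top_eq_last, Fin.val_last, sub_add_cancel]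
  rw [coe_initialValues, hvG ⟨by positivity, by omega⟩]
  exact hG_apply

lemma ncard_symmProfiles (ht : 0 < t) : (symmProfiles h t).ncard = (h + t / 2).choose (t / 2) := by
  have hbij : Function.Bijective (initialValues : symmProfiles h t → _) :=
    ⟨initialValues_injective ht, initialValues_surjective ht⟩
  rw [← Nat.card_coe_set_eq, Nat.card_eq_of_bijective _ hbij, card_orderHom_fin, Nat.card_fin,
    Nat.multichoose_eq]
  congr 1
  omega

end ProfileCount

lemma ncard_selfConj_core_of_odd {s t : ℕ} (hs : Odd s) (ht : 0 < t) (hst : s.Coprime t) :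
    {p | SelfConj p ∧ IsCore s p ∧ IsCore t p}.ncard = (s / 2 + t / 2).choose (t / 2) := by
  obtain ⟨h, rfl⟩ := hs
  have hcast : ((2 * h + 1 : ℕ) : ℤ) = 2 * h + 1 := by push_cast; rfl
  have hhalf : (2 * h + 1) / 2 = h := by omega
  rw [(bijOn_betaSet (by omega) ht hst).ncard_eq, hcast,
    ← (bijOn_region hst ht).ncard_eq, ncard_symmProfiles ht, hhalf]

/-- The number of self-conjugate `(s,t)`-cores is `C(⌊s/2⌋ + ⌊t/2⌋, ⌊s/2⌋)`. -/
theorem count_sc_st_cores (s t : ℕ) (hs : 0 < s) (ht : 0 < t) (hst : Nat.Coprime s t) :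
    Set.ncard {p : Partn | SelfConj p ∧ IsCore s p ∧ IsCore t p} =
      (s / 2 + t / 2).choose (s / 2) := by
  rcases s.even_or_odd with hs_even | hs_odd
  · have ht_odd : Odd t := (hst.coprime_dvd_left hs_even.two_dvd).odd_of_left
    simp_rw [and_comm (a := IsCore s _), add_comm (s / 2)]
    exact ncard_selfConj_core_of_odd ht_odd hs hst.symm
  · rw [ncard_selfConj_core_of_odd hs_odd ht hst, Nat.choose_symm_add]
end

section
/- Let λ be an s-core, and for each residue class i modulo t let c_i be the number of elements of the s-set S(λ) congruent to i modulo t. Then the order of the stabiliser of λ under the level-t action of W̃_s on the set of s-cores equals the product over i ∈ ℤ/tℤ of c_i!. -/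
/-! Fix a system `X` of representatives of `ℤ / sℤ` and write `x u` for its element congruent to
`t * u - c` modulo `s`. Since the `w_i` generate `W̃_s`, the level `t` action of `w` shifts `x u` by
`t * (w u - u)`. Hence if `w` stabilises `X`, it permutes `X` preserving residues modulo `t`, and
this permutation `σ` determines `w` through `t * (w u - u) = σ (x u) - x u`. Conversely, every such
`σ` defines a `w` by this formula, and its displacements `w u - u` add up to `0` over a period
because `σ` does not change the sum of the elements of `X`. -/

/-- `X` is a complete residue system modulo `s`: it contains exactly one integer from each class.
This is the only property of the `s`-set of an `s`-core on which the stabiliser depends. -/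
def IsResidueSystem (s : ℕ) (X : Set ℤ) : Prop :=
  Function.Bijective fun x : X => ((x : ℤ) : ZMod s)

/-! ### The `s`-set of an `s`-core -/

namespace Partn

variable (p : Partn)

lemma exists_forall_lt_iff (c : ℕ) : ∃ n, ∀ r, c < p.f r ↔ r < n := by
  classical
  obtain ⟨N, hN⟩ := p.eventually_zero
  have hex : ∃ n, p.f n ≤ c := ⟨N, by simp [hN N le_rfl]⟩
  refine ⟨Nat.find hex, fun r => ?_⟩
  rw [Nat.lt_find_iff]
  exact ⟨fun hr m hm => (hr.trans_le (p.antitone hm)).not_ge, fun h => not_le.mp (h r le_rfl)⟩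

lemma lt_conjCount_iff {r c : ℕ} : r < conjCount p c ↔ c < p.f r := by
  obtain ⟨n, hn⟩ := p.exists_forall_lt_iff c
  have hset : {i : ℕ | c + 1 ≤ p.f i} = Set.Iio n := Set.ext hn
  rw [conjCount, hset, Set.ncard_Iio_nat, hn]

lemma exists_eq_sub_conjCount {y : ℤ} (hy : y ∉ betaSet p) : ∃ c : ℕ, y = c - conjCount p c := by
  classical
  have hex : ∃ n : ℕ, (p.f n : ℤ) - (n + 1) < y := by
    refine ⟨(p.f 0 - y).toNat, ?_⟩
    have := p.antitone (Nat.zero_le (p.f 0 - y).toNat)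
    omega
  obtain ⟨n, hn, hmin⟩ : ∃ n : ℕ, (p.f n : ℤ) - (n + 1) < y ∧
      ∀ m < n, y < (p.f m : ℤ) - (m + 1) :=
    ⟨Nat.find hex, Nat.find_spec hex, fun m hm =>
      lt_of_le_of_ne (not_lt.mp (Nat.find_min hex hm)) fun h => hy ⟨m, h⟩⟩
  have hconj : conjCount p (y + n).toNat = n := by
    refine eq_of_forall_lt_iff fun r => ?_
    rw [lt_conjCount_iff]
    constructor
    · intro hr
      by_contra hnr
      have := p.antitone (not_lt.mp hnr)
      omega
    · intro hr
      have := hmin (n - 1) (by omega)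
      have := p.antitone (show r ≤ n - 1 by omega)
      omega
  exact ⟨(y + n).toNat, by omega⟩

lemma bddAbove_betaSet : BddAbove (betaSet p) := by
  refine ⟨p.f 0, ?_⟩
  rintro _ ⟨i, rfl⟩
  have := p.antitone (Nat.zero_le i)
  omega

lemma exists_Iic_subset_betaSet : ∃ N : ℤ, Set.Iic N ⊆ betaSet p := by
  obtain ⟨N, hN⟩ := p.eventually_zero
  refine ⟨-(N : ℤ) - 1, fun b hb => ⟨(-b - 1).toNat, ?_⟩⟩
  rw [Set.mem_Iic] at hb
  rw [hN _ (by omega)]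
  omega

end Partn

/-- A cell in the row of `b` and the column of `b - s` would have hook length `s`. -/
lemma IsCore.sub_mem_betaSet {s : ℕ} {p : Partn} (hp : IsCore s p) {b : ℤ}
    (hb : b ∈ betaSet p) : b - s ∈ betaSet p := by
  by_contra hy
  obtain ⟨c, hc⟩ := p.exists_eq_sub_conjCount hy
  obtain ⟨r, rfl⟩ := hb
  have hhook : hookLen p r c = s := by
    rw [hookLen]
    linarith
  have hcell : ¬ c < p.f r := fun h => hp r c h (hhook ▸ dvd_rfl)
  have hcol : ¬ r < conjCount p c := by rwa [p.lt_conjCount_iff]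
  omega

section Abacus

variable {s : ℕ} {B : Set ℤ}

lemma sub_mul_mem_of_sub_mem (hsub : ∀ b ∈ B, b - s ∈ B) {b : ℤ} (hb : b ∈ B) (k : ℕ) :
    b - k * s ∈ B := by
  induction k with
  | zero => simpa using hb
  | succ k ih =>
    convert hsub _ ih using 1
    push_cast
    ring

lemma le_of_sub_mem_of_notMem (hsub : ∀ b ∈ B, b - s ∈ B) {x y : ℤ} (hx : x ∉ B) (hy : y - s ∈ B)
    (hxy : (x : ZMod s) = y) : y ≤ x := by
  by_contra! hlt
  obtain ⟨k, hk⟩ := (ZMod.intCast_eq_intCast_iff_dvd_sub x y s).1 hxy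
  have hk0 : 0 < k := pos_of_mul_pos_right (a := (s : ℤ)) (by linarith) (by positivity)
  have hmem := sub_mul_mem_of_sub_mem hsub hy (k - 1).toNat
  rw [Int.toNat_of_nonneg (by omega),
    show y - s - (k - 1) * s = x by linear_combination hk] at hmem
  exact hx hmem

lemma exists_greatest_of_intCast_eq [NeZero s] (habove : BddAbove B)
    (hbelow : ∃ N : ℤ, Set.Iic N ⊆ B) (a : ZMod s) :
    ∃ b ∈ B, (b : ZMod s) = a ∧ b + s ∉ B := by
  obtain ⟨n, rfl⟩ := ZMod.intCast_surjective a
  obtain ⟨M, hM⟩ := habove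
  obtain ⟨N, hN⟩ := hbelow
  have hs : (1 : ℤ) ≤ s := by exact_mod_cast NeZero.one_le (n := s)
  obtain ⟨k, hk, hmax⟩ := Int.exists_greatest_of_bdd (P := fun z => n + z * s ∈ B)
    ⟨|M - n|, fun z hz => by
      by_contra! hlt
      nlinarith [hM hz, le_abs_self (M - n), abs_nonneg (M - n)]⟩
    ⟨-|n - N|, hN (by
      rw [Set.mem_Iic]
      nlinarith [le_abs_self (n - N), abs_nonneg (n - N)])⟩
  refine ⟨n + k * s, hk, by simp, fun hmem => ?_⟩
  have := hmax (k + 1) (by rwa [add_one_mul, ← add_assoc])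
  omega

lemma isResidueSystem_of_sub_mem [NeZero s] (hsub : ∀ b ∈ B, b - s ∈ B) (habove : BddAbove B)
    (hbelow : ∃ N : ℤ, Set.Iic N ⊆ B) : IsResidueSystem s {x | x - s ∈ B ∧ x ∉ B} := by
  refine ⟨fun ⟨x, hx⟩ ⟨y, hy⟩ hxy => Subtype.ext ?_, fun a => ?_⟩
  · exact le_antisymm (le_of_sub_mem_of_notMem hsub hy.2 hx.1 hxy.symm)
      (le_of_sub_mem_of_notMem hsub hx.2 hy.1 hxy)
  · obtain ⟨b, hb, rfl, hbs⟩ := exists_greatest_of_intCast_eq habove hbelow a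
    exact ⟨⟨b + s, by rwa [add_sub_cancel_right], hbs⟩, by simp⟩

end Abacus

lemma IsCore.isResidueSystem_sSet {s : ℕ} [NeZero s] {p : Partn} (hp : IsCore s p) :
    IsResidueSystem s (sSet s p) :=
  isResidueSystem_of_sub_mem (fun _ => hp.sub_mem_betaSet) p.bddAbove_betaSet
    p.exists_Iic_subset_betaSet

/-! ### Sums over a period -/

section Periodic

variable {s : ℕ} {M : Type*}

@[to_additive]
lemma prod_range_natCast_zmod [CommMonoid M] [NeZero s] (f : ZMod s → M) :
    ∏ i ∈ Finset.range s, f i = ∏ a, f a :=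
  Finset.prod_nbij' (Nat.cast) ZMod.val (by simp) (by simp [ZMod.val_lt])
    (fun i hi => ZMod.val_cast_of_lt (Finset.mem_range.1 hi)) (by simp) (by simp)

lemma apply_cast_zmod_of_periodic {f : ℤ → M} (hf : Function.Periodic f s) (m : ℤ) :
    f ((m : ZMod s).cast) = f m := by
  rw [ZMod.coe_intCast, Int.emod_def, mul_comm, ← smul_eq_mul, hf.sub_zsmul_eq]

variable [AddCommMonoid M] {f : ℤ → M}

lemma sum_range_of_periodic [NeZero s] (hf : Function.Periodic f s) :
    ∑ i ∈ Finset.range s, f i = ∑ a : ZMod s, f a.cast := by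
  rw [← sum_range_natCast_zmod fun a : ZMod s => f a.cast]
  refine Finset.sum_congr rfl fun i _ => ?_
  rw [← apply_cast_zmod_of_periodic hf, Int.cast_natCast]

lemma sum_range_eq_add_of_periodic [NeZero s] (hf : Function.Periodic f s) {a b : ℤ}
    (hab : (a : ZMod s) ≠ b) (h0 : ∀ m : ℤ, (m : ZMod s) ≠ a → (m : ZMod s) ≠ b → f m = 0) :
    ∑ i ∈ Finset.range s, f i = f a + f b := by
  rw [sum_range_of_periodic hf, Fintype.sum_eq_add (a : ZMod s) b hab fun x hx =>
      h0 _ (by simpa using hx.1) (by simpa using hx.2),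
    apply_cast_zmod_of_periodic hf, apply_cast_zmod_of_periodic hf]

lemma map_add_mul_of_map_add {w : ℤ → ℤ} (hw : ∀ m, w (m + s) = w m + s) (m k : ℤ) :
    w (m + k * s) = w m + k * s := by
  have hper : Function.Periodic (fun m => w m - m) s := fun m => by simp [hw]
  have hk : w (m + k * s) - (m + k * s) = w m - m := hper.zsmul k m
  linarith

lemma intCast_eq_of_map_add {w : Equiv.Perm ℤ} (hw : ∀ m, w (m + s) = w m + s) {m n : ℤ}
    (h : (w m : ZMod s) = w n) : (m : ZMod s) = n := by
  obtain ⟨k, hk⟩ := (ZMod.intCast_eq_intCast_iff_dvd_sub _ _ s).1 h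
  have hn : n = m + k * s := w.injective <| by
    rw [map_add_mul_of_map_add hw]
    linear_combination hk
  simp [hn]

lemma sum_range_comp_perm_of_periodic (hf : Function.Periodic f s) {w : Equiv.Perm ℤ}
    (hw : ∀ m, w (m + s) = w m + s) :
    ∑ i ∈ Finset.range s, f (w i) = ∑ i ∈ Finset.range s, f i := by
  obtain rfl | hs := eq_or_ne s 0
  · simp
  have : NeZero s := ⟨hs⟩
  have hinj : Function.Injective fun a : ZMod s => (w a.cast : ZMod s) := fun a b hab => by
    simpa using intCast_eq_of_map_add hw hab
  calc ∑ i ∈ Finset.range s, f (w i)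
      = ∑ a : ZMod s, f (w a.cast) :=
        sum_range_of_periodic (f := fun m => f (w m)) fun m => by simp only [hw, hf (w m)]
    _ = ∑ a : ZMod s, f ((w a.cast : ZMod s).cast) := by simp only [apply_cast_zmod_of_periodic hf]
    _ = ∑ a : ZMod s, f a.cast :=
        (Finite.injective_iff_bijective.1 hinj).sum_comp fun a : ZMod s => f a.cast
    _ = ∑ i ∈ Finset.range s, f i := (sum_range_of_periodic hf).symm

end Periodic

/-! ### Generators of the affine symmetric group -/

lemma mem_affSymSet_iff {s : ℕ} {w : Equiv.Perm ℤ} :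
    w ∈ AffSymSet s ↔
      (∀ m : ℤ, w (m + s) = w m + s) ∧ ∑ i ∈ Finset.range s, (w i - i) = 0 := by
  have hsum : ∑ i ∈ Finset.range s, (i : ℤ) = s.choose 2 := by
    rw [← Nat.cast_sum, Finset.sum_range_id, Nat.choose_two_right]
  rw [AffSymSet, Set.mem_ofPred_eq, Finset.sum_sub_distrib, hsum, sub_eq_zero]

/-- The affine symmetric group `AffSymSet s` as a subgroup of the permutations of `ℤ`, so that
generation by the `w_i` can be expressed with `Subgroup.closure`. -/
def affSymSubgroup (s : ℕ) : Subgroup (Equiv.Perm ℤ) where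
  carrier := AffSymSet s
  one_mem' := mem_affSymSet_iff.2 ⟨fun _ => rfl, by simp⟩
  mul_mem' := by
    intro w v hw hv
    rw [mem_affSymSet_iff] at hw hv ⊢
    refine ⟨fun m => by simp [hv.1, hw.1], ?_⟩
    have hper : Function.Periodic (fun m => w m - m) s := fun m => by simp [hw.1]
    calc ∑ i ∈ Finset.range s, ((w * v) i - i)
        = ∑ i ∈ Finset.range s, (w (v i) - v i) + ∑ i ∈ Finset.range s, (v i - i) := by
          rw [← Finset.sum_add_distrib]
          simp
      _ = 0 := by rw [sum_range_comp_perm_of_periodic hper hv.1, hw.2, hv.2, add_zero]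
  inv_mem' := by
    intro w hw
    rw [mem_affSymSet_iff] at hw ⊢
    have hinv : ∀ m, w⁻¹ (m + s) = w⁻¹ m + s := fun m => by
      rw [Equiv.Perm.inv_eq_iff_eq, hw.1]
      simp
    refine ⟨hinv, ?_⟩
    have hper : Function.Periodic (fun m => w⁻¹ m - m) s := fun m => by simp [hinv]
    rw [← sum_range_comp_perm_of_periodic hper hw.1, ← neg_eq_zero, ← Finset.sum_neg_distrib]
    simpa using hw.2

lemma genFun_add_period (s : ℕ) (a m : ℤ) : genFun s a (m + s) = genFun s a m + s := by
  have hdvd : ∀ b, (s : ℤ) ∣ m + s - b ↔ (s : ℤ) ∣ m - b := fun b => by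
    rw [add_sub_right_comm, dvd_add_self_right]
  simp only [genFun, sub_sub, hdvd]
  split_ifs <;> ring

lemma genFun_of_intCast_ne {s : ℕ} {a m : ℤ} (ha : (m : ZMod s) ≠ a)
    (ha' : (m : ZMod s) ≠ (a + 1 : ℤ)) : genFun s a m = m := by
  rw [ne_comm, Ne, ZMod.intCast_eq_intCast_iff_dvd_sub] at ha ha'
  rw [genFun, if_neg ha, sub_sub, if_neg ha']

section Generators

variable {s : ℕ} (hs : 2 ≤ s) {w : Equiv.Perm ℤ} (a : ℤ)

lemma genPerm_apply (m : ℤ) : genPerm s hs a m = genFun s a m := rfl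

lemma genPerm_apply_self : genPerm s hs a a = a + 1 := by simp [genPerm_apply, genFun]

lemma genPerm_apply_add_one : genPerm s hs a (a + 1) = a := by
  rw [← genPerm_apply_self hs a]
  exact genFun_involutive s hs a a

lemma genPerm_add_period (m : ℤ) : genPerm s hs a (m + s) = genPerm s hs a m + s :=
  genFun_add_period s a m

lemma genPerm_inv : (genPerm s hs a)⁻¹ = genPerm s hs a :=
  Function.Involutive.symm_eq_self_of_involutive _ (genFun_involutive s hs a)

lemma sum_range_eq_add_of_genPerm_fixed {f : ℤ → ℤ} (hf : Function.Periodic f s)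
    (h0 : ∀ m, genPerm s hs a m = m → f m = 0) :
    ∑ i ∈ Finset.range s, f i = f a + f (a + 1) := by
  have : NeZero s := ⟨by omega⟩
  have : Fact (1 < s) := ⟨hs⟩
  exact sum_range_eq_add_of_periodic hf (by simp) fun m ha ha' => h0 m (genFun_of_intCast_ne ha ha')

lemma genPerm_mem_affSymSet : genPerm s hs a ∈ AffSymSet s := by
  rw [mem_affSymSet_iff]
  refine ⟨genPerm_add_period hs a, ?_⟩
  rw [sum_range_eq_add_of_genPerm_fixed hs a (f := fun m => genPerm s hs a m - m)
      (fun m => by simp [genPerm_add_period]) (fun m hm => by rw [hm, sub_self]),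
    genPerm_apply_self, genPerm_apply_add_one]
  ring

/-- The squared displacement of `w` over one period. It plays the role of the length in the proof
that the `w_i` generate: it drops at every descent of `w`. -/
def sqDispl (s : ℕ) (w : Equiv.Perm ℤ) : ℤ := ∑ i ∈ Finset.range s, (w i - i) ^ 2

lemma sqDispl_nonneg (s : ℕ) (w : Equiv.Perm ℤ) : 0 ≤ sqDispl s w :=
  Finset.sum_nonneg fun _ _ => sq_nonneg _

lemma sqDispl_mul_genPerm (hw : ∀ m, w (m + s) = w m + s) :
    sqDispl s (w * genPerm s hs a) = sqDispl s w - 2 * (w a - w (a + 1)) := by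
  have hchange := sum_range_eq_add_of_genPerm_fixed hs a
    (f := fun m => ((w * genPerm s hs a) m - m) ^ 2 - (w m - m) ^ 2)
    (fun m => by simp [genPerm_add_period, hw])
    (fun m hm => by rw [Equiv.Perm.mul_apply, hm, sub_self])
  simp only [Finset.sum_sub_distrib, Equiv.Perm.mul_apply, genPerm_apply_self,
    genPerm_apply_add_one] at hchange
  simp only [sqDispl, Equiv.Perm.mul_apply]
  linear_combination hchange

lemma perm_int_apply_of_strictMono (hw : StrictMono w) (m : ℤ) : w m = m + w 0 := by
  let e : ℤ ≃o ℤ := hw.orderIsoOfSurjective w w.surjective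
  have hper : Function.Periodic (fun m => w m - m) 1 := fun m => by
    have : w (m + 1) = w m + 1 := e.map_succ m
    simp [this]
  have hm : w m - m = w 0 - 0 := by simpa using hper.zsmul_eq m
  linarith

lemma eq_one_of_strictMono [NeZero s] (hw : w ∈ AffSymSet s) (hmono : StrictMono w) : w = 1 := by
  have htrans := perm_int_apply_of_strictMono hmono
  have hsum : s * w 0 = 0 := by
    have hdispl : ∀ i : ℕ, w i - i = w 0 := fun i => by rw [htrans, add_sub_cancel_left]
    simpa only [hdispl, Finset.sum_const, Finset.card_range, nsmul_eq_mul] using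
      (mem_affSymSet_iff.1 hw).2
  have h0 : w 0 = 0 := by simpa [NeZero.ne s] using hsum
  exact Equiv.ext fun m => by rw [htrans, h0, add_zero, Equiv.Perm.one_apply]

theorem closure_range_genPerm :
    Subgroup.closure (Set.range (genPerm s hs)) = affSymSubgroup s := by
  have : NeZero s := ⟨by omega⟩
  refine le_antisymm ((Subgroup.closure_le _).2 ?_) fun w hw => ?_
  · rintro _ ⟨a, rfl⟩
    exact genPerm_mem_affSymSet hs a
  induction hn : (sqDispl s w).toNat using Nat.strong_induction_on generalizing w with
  | _ n ih =>
    by_cases hdesc : ∃ a, w (a + 1) < w a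
    · obtain ⟨a, ha⟩ := hdesc
      have hgen : genPerm s hs a ∈ Subgroup.closure (Set.range (genPerm s hs)) :=
        Subgroup.subset_closure ⟨a, rfl⟩
      refine (Subgroup.mul_mem_cancel_right _ hgen).1 (ih _ ?_ _
        (mul_mem hw (genPerm_mem_affSymSet hs a)) rfl)
      have hdrop := sqDispl_mul_genPerm hs a hw.1
      have hnonneg := sqDispl_nonneg s (w * genPerm s hs a)
      omega
    · push Not at hdesc
      have hmono : StrictMono w := strictMono_int_of_lt_succ fun a =>
        lt_of_le_of_ne (hdesc a) (w.injective.ne (by omega))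
      rw [eq_one_of_strictMono hw hmono]
      exact one_mem _

end Generators

/-! ### The level `t` action -/

namespace IsLevelTAction

variable {s t : ℕ} {hs : 2 ≤ s} {Φ : Equiv.Perm ℤ → Equiv.Perm ℤ} {w : Equiv.Perm ℤ} {u m : ℤ}

lemma map_one (hΦ : IsLevelTAction s t hs Φ) : Φ 1 = 1 := by
  have hone : (1 : Equiv.Perm ℤ) ∈ AffSymSet s := one_mem (affSymSubgroup s)
  simpa using hΦ.1 1 1 hone hone

lemma genPerm_apply_eq (hst : Nat.Coprime s t) (hΦ : IsLevelTAction s t hs Φ) (a : ℤ)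
    (hm : (m : ZMod s) = t * u - lc s t) :
    Φ (genPerm s hs a) m = m + t * (genPerm s hs a u - u) := by
  have hunit : IsUnit (t : ZMod s) := (ZMod.isUnit_iff_coprime t s).2 hst.symm
  have hdvd : ∀ j : ℤ, (s : ℤ) ∣ m - (j * t - lc s t) ↔ (s : ℤ) ∣ u - j := fun j => by
    rw [← ZMod.intCast_eq_intCast_iff_dvd_sub, ← ZMod.intCast_eq_intCast_iff_dvd_sub, hm]
    push_cast
    rw [sub_left_inj, mul_comm, hunit.mul_right_inj]
  have hgen := hΦ.2 (a + 1) m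
  rw [add_sub_cancel_right] at hgen
  rw [hgen, genPerm_apply, levelGenFun, genFun]
  simp only [add_sub_cancel_right, hdvd, sub_sub u a 1]
  split_ifs <;> ring

theorem apply_eq (hst : Nat.Coprime s t) (hΦ : IsLevelTAction s t hs Φ) (hw : w ∈ AffSymSet s)
    (hm : (m : ZMod s) = t * u - lc s t) : Φ w m = m + t * (w u - u) := by
  have hmul_gen : ∀ w ∈ Subgroup.closure (Set.range (genPerm s hs)), ∀ a,
      (∀ u m : ℤ, (m : ZMod s) = t * u - lc s t → Φ w m = m + t * (w u - u)) →
      ∀ u m : ℤ, (m : ZMod s) = t * u - lc s t →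
        Φ (w * genPerm s hs a) m = m + t * ((w * genPerm s hs a) u - u) := by
    intro w hw a ih u m hm
    rw [closure_range_genPerm] at hw
    rw [hΦ.1 w _ hw (genPerm_mem_affSymSet hs a), Equiv.Perm.mul_apply, Equiv.Perm.mul_apply,
      hΦ.genPerm_apply_eq hst a hm, ih (genPerm s hs a u)]
    · ring
    · push_cast
      rw [hm]
      ring
  replace hw : w ∈ Subgroup.closure (Set.range (genPerm s hs)) := by
    rwa [closure_range_genPerm]
  induction hw using Subgroup.closure_induction_right generalizing u m with
  | one => simp [hΦ.map_one]
  | mul_right w hw g hg ih =>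
    obtain ⟨a, rfl⟩ := hg
    exact hmul_gen w hw a (fun _ _ => ih) u m hm
  | mul_inv_cancel w hw g hg ih =>
    obtain ⟨a, rfl⟩ := hg
    rw [genPerm_inv]
    exact hmul_gen w hw a (fun _ _ => ih) u m hm

end IsLevelTAction

/-! ### The stabiliser of a residue system -/

section Stabiliser

variable {s t : ℕ} {X : Set ℤ} (hst : Nat.Coprime s t) (hX : IsResidueSystem s X)

/-- The indexing of the residue system `X` by `ZMod s` in which `u` labels the element congruent to
`t * u - c` modulo `s`. With these labels the level `t` action is governed by the displacements
`w u - u`. -/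
noncomputable def levelIndex : ZMod s ≃ X :=
  (ZMod.unitOfCoprime t hst.symm).mulLeft.trans <|
    (Equiv.subRight (lc s t : ZMod s)).trans (Equiv.ofBijective _ hX).symm

lemma intCast_levelIndex (u : ZMod s) :
    ((levelIndex hst hX u : ℤ) : ZMod s) = t * u - lc s t :=
  Equiv.ofBijective_apply_symm_apply _ hX _

lemma eq_levelIndex {x : X} {u : ZMod s} (hx : ((x : ℤ) : ZMod s) = t * u - lc s t) :
    x = levelIndex hst hX u :=
  hX.injective (hx.trans (intCast_levelIndex hst hX u).symm)

lemma exists_levelIndex_intCast_eq (x : X) : ∃ u : ℤ, levelIndex hst hX u = x := by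
  obtain ⟨a, rfl⟩ := (levelIndex hst hX).surjective x
  obtain ⟨u, rfl⟩ := ZMod.intCast_surjective a
  exact ⟨u, rfl⟩

lemma IsLevelTAction.apply_levelIndex {hs : 2 ≤ s} {Φ : Equiv.Perm ℤ → Equiv.Perm ℤ}
    {w : Equiv.Perm ℤ} (hΦ : IsLevelTAction s t hs Φ) (hw : w ∈ AffSymSet s) (u : ℤ) :
    Φ w (levelIndex hst hX u) = levelIndex hst hX u + t * (w u - u) :=
  hΦ.apply_eq hst hw (intCast_levelIndex hst hX u)

/-- The map `u ↦ w u` of the affine permutation `w` that induces the permutation `σ` of `X`. It is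
meaningful only if `σ` preserves residues modulo `t`; otherwise the quotient is rounded. -/
noncomputable def permLift (σ : Equiv.Perm X) (u : ℤ) : ℤ :=
  u + (σ (levelIndex hst hX u) - levelIndex hst hX u) / t

variable {σ τ : Equiv.Perm X}

lemma mul_permLift_sub (hσ : ∀ x, ((σ x : ℤ) : ZMod t) = (x : ℤ)) (u : ℤ) :
    t * (permLift hst hX σ u - u) = σ (levelIndex hst hX u) - levelIndex hst hX u := by
  rw [permLift, add_sub_cancel_left, Int.mul_ediv_cancel'
    ((ZMod.intCast_eq_intCast_iff_dvd_sub _ _ t).1 (hσ _).symm)]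

lemma levelIndex_permLift (hσ : ∀ x, ((σ x : ℤ) : ZMod t) = (x : ℤ)) (u : ℤ) :
    levelIndex hst hX (permLift hst hX σ u : ℤ) = σ (levelIndex hst hX u) := by
  have hlift : (σ (levelIndex hst hX u) : ℤ) =
      levelIndex hst hX u + t * (permLift hst hX σ u - u) := by
    rw [mul_permLift_sub hst hX hσ, add_sub_cancel]
  refine (eq_levelIndex hst hX ?_).symm
  rw [hlift]
  push_cast
  rw [intCast_levelIndex]
  ring

lemma permLift_one (u : ℤ) : permLift hst hX 1 u = u := by simp [permLift]

lemma permLift_mul [NeZero t] (hσ : ∀ x, ((σ x : ℤ) : ZMod t) = (x : ℤ))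
    (hτ : ∀ x, ((τ x : ℤ) : ZMod t) = (x : ℤ)) (u : ℤ) :
    permLift hst hX (τ * σ) u = permLift hst hX τ (permLift hst hX σ u) := by
  have hτσ : ∀ x, (((τ * σ) x : ℤ) : ZMod t) = (x : ℤ) := fun x => (hτ _).trans (hσ x)
  have hcomp := mul_permLift_sub hst hX hτ (permLift hst hX σ u)
  rw [levelIndex_permLift hst hX hσ, ← Equiv.Perm.mul_apply] at hcomp
  refine mul_left_cancel₀ (Nat.cast_ne_zero.2 (NeZero.ne t) : (t : ℤ) ≠ 0) ?_
  linear_combination mul_permLift_sub hst hX hτσ u - mul_permLift_sub hst hX hσ u - hcomp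

/-- `permLift` as a permutation of `ℤ`: the preimage of a residue-preserving permutation of `X` in
the affine symmetric group. -/
noncomputable def permLiftEquiv [NeZero t] (hσ : ∀ x, ((σ x : ℤ) : ZMod t) = (x : ℤ)) :
    Equiv.Perm ℤ :=
  have hinv : ∀ x, ((σ⁻¹ x : ℤ) : ZMod t) = (x : ℤ) := fun x => by simpa using (hσ (σ⁻¹ x)).symm
  { toFun := permLift hst hX σ
    invFun := permLift hst hX σ⁻¹
    left_inv := fun u => by rw [← permLift_mul hst hX hσ hinv, inv_mul_cancel, permLift_one]
    right_inv := fun u => by rw [← permLift_mul hst hX hinv hσ, mul_inv_cancel, permLift_one] }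

lemma permLiftEquiv_apply [NeZero t] (hσ : ∀ x, ((σ x : ℤ) : ZMod t) = (x : ℤ)) (u : ℤ) :
    permLiftEquiv hst hX hσ u = permLift hst hX σ u := rfl

lemma permLift_add_period (u : ℤ) : permLift hst hX σ (u + s) = permLift hst hX σ u + s := by
  simp [permLift, add_right_comm]

lemma IsResidueSystem.finite [NeZero s] (hX : IsResidueSystem s X) : Finite X :=
  Finite.of_injective _ hX.injective

lemma sum_permLift_sub [NeZero t] (hσ : ∀ x, ((σ x : ℤ) : ZMod t) = (x : ℤ)) :
    ∑ i ∈ Finset.range s, (permLift hst hX σ i - i) = 0 := by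
  obtain rfl | hs := eq_or_ne s 0
  · simp
  have : NeZero s := ⟨hs⟩
  have := hX.finite
  have := Fintype.ofFinite X
  have ht : (t : ℤ) ≠ 0 := Nat.cast_ne_zero.2 (NeZero.ne t)
  refine (mul_eq_zero.1 ?_).resolve_left ht
  calc t * ∑ i ∈ Finset.range s, (permLift hst hX σ i - i)
      = ∑ i ∈ Finset.range s, ((σ (levelIndex hst hX i) : ℤ) - levelIndex hst hX i) := by
        simp only [Finset.mul_sum, mul_permLift_sub hst hX hσ, Int.cast_natCast]
    _ = ∑ a, ((σ (levelIndex hst hX a) : ℤ) - levelIndex hst hX a) :=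
        sum_range_natCast_zmod fun a => (σ (levelIndex hst hX a) : ℤ) - levelIndex hst hX a
    _ = ∑ x : X, ((σ x : ℤ) - x) := (levelIndex hst hX).sum_comp fun x : X => (σ x : ℤ) - x
    _ = 0 := by
        rw [Finset.sum_sub_distrib, Equiv.sum_comp σ (fun x : X => (x : ℤ)), sub_self]

lemma permLiftEquiv_mem_affSymSet [NeZero t] (hσ : ∀ x, ((σ x : ℤ) : ZMod t) = (x : ℤ)) :
    permLiftEquiv hst hX hσ ∈ AffSymSet s :=
  mem_affSymSet_iff.2 ⟨permLift_add_period hst hX, sum_permLift_sub hst hX hσ⟩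

lemma IsLevelTAction.apply_permLiftEquiv {hs : 2 ≤ s} {Φ : Equiv.Perm ℤ → Equiv.Perm ℤ}
    [NeZero t] (hΦ : IsLevelTAction s t hs Φ)
    (hσ : ∀ x, ((σ x : ℤ) : ZMod t) = (x : ℤ)) (x : X) :
    Φ (permLiftEquiv hst hX hσ) x = σ x := by
  obtain ⟨u, rfl⟩ := exists_levelIndex_intCast_eq hst hX x
  rw [hΦ.apply_levelIndex hst hX (permLiftEquiv_mem_affSymSet hst hX hσ), permLiftEquiv_apply,
    mul_permLift_sub hst hX hσ, add_sub_cancel]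

lemma image_eq_of_forall_eq_perm {g : ℤ → ℤ} (h : ∀ x : X, g x = σ x) : g '' X = X := by
  rw [Set.image_eq_range, funext h]
  exact (σ.surjective.range_comp Subtype.val).trans Subtype.range_coe

/-- An element of the affine symmetric group stabilising `X` acts on `X` by a permutation preserving
residues modulo `t`, and every such permutation comes from exactly one such element. -/
noncomputable def stabEquiv {hs : 2 ≤ s} {Φ : Equiv.Perm ℤ → Equiv.Perm ℤ} [NeZero t]
    (hΦ : IsLevelTAction s t hs Φ) :
    {w : Equiv.Perm ℤ // w ∈ AffSymSet s ∧ Φ w '' X = X} ≃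
      {σ : Equiv.Perm X //
        (fun x : X => ((x : ℤ) : ZMod t)) ∘ σ = fun x : X => ((x : ℤ) : ZMod t)} where
  toFun w := ⟨((Φ w).image X).trans (Equiv.setCongr w.2.2), funext fun x => by
    obtain ⟨u, rfl⟩ := exists_levelIndex_intCast_eq hst hX x
    simp [hΦ.apply_levelIndex hst hX w.2.1]⟩
  invFun σ :=
    have hσ := congrFun σ.2
    ⟨permLiftEquiv hst hX hσ, permLiftEquiv_mem_affSymSet hst hX hσ,
      image_eq_of_forall_eq_perm (hΦ.apply_permLiftEquiv hst hX hσ)⟩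
  left_inv w := Subtype.ext <| Equiv.ext fun u => by
    simp [permLiftEquiv_apply, permLift, hΦ.apply_levelIndex hst hX w.2.1, NeZero.ne t]
  right_inv σ := Subtype.ext <| Equiv.ext fun x => Subtype.ext <|
    hΦ.apply_permLiftEquiv hst hX (congrFun σ.2) x

end Stabiliser

lemma natCard_perm_comp_eq {α ι : Type*} [Finite α] [Fintype ι] (f : α → ι) :
    Nat.card {σ : Equiv.Perm α // f ∘ σ = f} = ∏ i, (Nat.card {a // f a = i}).factorial := by
  classical
  have := Fintype.ofFinite α
  simp only [Nat.card_eq_fintype_card, DomMulAct.stabilizer_card]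

lemma natCard_intCast_eq_natCast (X : Set ℤ) {t i : ℕ} (hi : i < t) :
    Nat.card {x : X // ((x : ℤ) : ZMod t) = i} = {x ∈ X | x % (t : ℤ) = i}.ncard := by
  have hmod : ∀ x : ℤ, (x : ZMod t) = i ↔ x % t = i := fun x => by
    rw [← Int.cast_natCast, ZMod.intCast_eq_intCast_iff',
      Int.emod_eq_of_lt (Int.natCast_nonneg i) (by exact_mod_cast hi)]
  rw [← Nat.card_coe_set_eq]
  exact Nat.card_congr ((Equiv.subtypeEquivRight fun x : X => hmod x).trans
    (Equiv.subtypeSubtypeEquivSubtypeInter (· ∈ X) fun x => x % (t : ℤ) = i))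

theorem stab_card_general {s t : ℕ} {hs : 2 ≤ s} (hst : Nat.Coprime s t)
    {Φ : Equiv.Perm ℤ → Equiv.Perm ℤ} (hΦ : IsLevelTAction s t hs Φ)
    {X : Set ℤ} (hX : IsResidueSystem s X) :
    Nat.card {w : Equiv.Perm ℤ // w ∈ AffSymSet s ∧ ⇑(Φ w) '' X = X} =
      ∏ i ∈ Finset.range t, Nat.factorial (Set.ncard {x ∈ X | x % (t : ℤ) = (i : ℤ)}) := by
  have : NeZero s := ⟨by omega⟩
  have : NeZero t := ⟨by rintro rfl; simp only [Nat.coprime_zero_right] at hst; omega⟩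
  have := hX.finite
  calc Nat.card {w : Equiv.Perm ℤ // w ∈ AffSymSet s ∧ Φ w '' X = X}
      = ∏ i : ZMod t, (Nat.card {x : X // ((x : ℤ) : ZMod t) = i}).factorial :=
        (Nat.card_congr (stabEquiv hst hX hΦ)).trans (natCard_perm_comp_eq _)
    _ = ∏ i ∈ Finset.range t, (Nat.card {x : X // ((x : ℤ) : ZMod t) = i}).factorial :=
        (prod_range_natCast_zmod _).symm
    _ = ∏ i ∈ Finset.range t, ({x ∈ X | x % (t : ℤ) = i}.ncard).factorial :=
        Finset.prod_congr rfl fun i hi => by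
          rw [natCard_intCast_eq_natCast X (Finset.mem_range.1 hi)]

/-- The order of the stabiliser of an `s`-core `λ` under the level `t` action of `W̃_s`
is `∏_{i ∈ ℤ/tℤ} c_i!`, where `c_i = #(S(λ) ∩ (i + tℤ))`. -/
theorem stab_card (s t : ℕ) (hs : 2 ≤ s) (ht : 0 < t) (hst : Nat.Coprime s t)
    (Φ : Equiv.Perm ℤ → Equiv.Perm ℤ) (hΦ : IsLevelTAction s t hs Φ)
    (p : Partn) (hp : IsCore s p) :
    Nat.card {w : Equiv.Perm ℤ // w ∈ AffSymSet s ∧ ⇑(Φ w) '' sSet s p = sSet s p} =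
      ∏ i ∈ Finset.range t, Nat.factorial (Set.ncard {x ∈ sSet s p | x % (t : ℤ) = (i : ℤ)}) :=
  have : NeZero s := ⟨by omega⟩
  stab_card_general hst hΦ hp.isResidueSystem_sSet
end
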